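/- For every positive integer r, if G is a (2,2r+1)-biregular bipartite graph, then r + 2 ≤ š(G) ≤ 2r + 2. -/

import Mathlib

open SimpleGraph Finset

/-- A proper edge coloring of `G` with colors in `ℕ`: distinct edges of `G`
sharing an endpoint receive distinct colors. -/
def IsProperEdgeColoring {V : Type*} (G : SimpleGraph V) (c : Sym2 V → ℕ) : Prop :=
  ∀ e₁ ∈ G.edgeSet, ∀ e₂ ∈ G.edgeSet, e₁ ≠ e₂ → (∃ v, v ∈ e₁ ∧ v ∈ e₂) → c e₁ ≠ c e₂

/-- The palette of a vertex `v`: the set of colors appearing on edges of `G` incident with `v`. -/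
def palette {V : Type*} (G : SimpleGraph V) (c : Sym2 V → ℕ) (v : V) : Set ℕ :=
  {n | ∃ e ∈ G.edgeSet, v ∈ e ∧ c e = n}

/-- The palette index of `G`: the minimum number of distinct palettes occurring in a
proper edge coloring of `G`. -/
noncomputable def paletteIndex {V : Type*} (G : SimpleGraph V) : ℕ :=
  sInf {k | ∃ c : Sym2 V → ℕ, IsProperEdgeColoring G c ∧ (Set.range (palette G c)).ncard = k}

/-- `G` is `(a,b)`-biregular: bipartite with nonempty parts `(X, Y)` such that every
vertex in `X` has degree `a` and every vertex in `Y` has degree `b`. -/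
def IsBiregular {V : Type*} [Fintype V] (G : SimpleGraph V) [DecidableRel G.Adj] (a b : ℕ) : Prop :=
  ∃ X Y : Finset V, X.Nonempty ∧ Y.Nonempty ∧ Disjoint X Y ∧ (∀ v : V, v ∈ X ∨ v ∈ Y) ∧
    (∀ v w, G.Adj v w → (v ∈ X ∧ w ∈ Y) ∨ (v ∈ Y ∧ w ∈ X)) ∧
    (∀ v ∈ X, G.degree v = a) ∧ (∀ v ∈ Y, G.degree v = b)


theorem aux_match {ε W : Type*} [DecidableEq ε] [DecidableEq W]
    (E : Finset ε) (o i : ε → W) (S : Finset W) (d : ℕ) (hd : 0 < d)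
    (h1 : ∀ v ∈ S, d ≤ (E.filter (fun e => o e = v)).card)
    (h2 : ∀ w, (E.filter (fun e => i e = w)).card ≤ d) :
    ∃ M ⊆ E, Set.InjOn o M ∧ Set.InjOn i M ∧ M.image o = S := by
  classical
  let t : S → Finset W := fun v => (E.filter (fun e => o e = v)).image i
  have hall : ∀ s : Finset S, s.card ≤ (s.biUnion t).card := by
    intro s
    have a1 : s.card * d ≤ (E.filter (fun e => ∃ v ∈ s, o e = v.1)).card := by
      have : (E.filter (fun e => ∃ v ∈ s, o e = v.1)) =
          s.biUnion (fun v => E.filter (fun e => o e = v.1)) := by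
        ext e; simp; tauto
      rw [this, Finset.card_biUnion]
      · rw [← smul_eq_mul]
        exact Finset.card_nsmul_le_sum _ _ _ (fun v _ => h1 v.1 v.2)
      · intro v _ w _ hvw
        show Disjoint _ _
        rw [Finset.disjoint_left]
        intro e he he'
        simp at he he'
        exact hvw (Subtype.ext (he.2.symm.trans he'.2))
    have a2 : (E.filter (fun e => ∃ v ∈ s, o e = v.1)).card ≤ (s.biUnion t).card * d := by
      have : (E.filter (fun e => ∃ v ∈ s, o e = v.1)) ⊆
          (s.biUnion t).biUnion (fun w => E.filter (fun e => i e = w)) := by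
        intro e he
        simp only [Finset.mem_filter] at he
        obtain ⟨heE, v, hv, hov⟩ := he
        simp only [Finset.mem_biUnion, Finset.mem_filter, t, Finset.mem_image]
        exact ⟨i e, ⟨v, hv, e, ⟨heE, hov⟩, rfl⟩, heE, rfl⟩
      exact (Finset.card_le_card this).trans (Finset.card_biUnion_le_card_mul _ _ _ (fun w _ => h2 w))
    exact Nat.le_of_mul_le_mul_right (a1.trans a2) hd
  obtain ⟨φ, hφ, hφt⟩ := (Finset.all_card_le_biUnion_card_iff_exists_injective t).1 hall
  have : ∀ v : S, ∃ e ∈ E, o e = v ∧ i e = φ v := by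
    intro v
    have := hφt v
    simp only [t, Finset.mem_image, Finset.mem_filter] at this
    obtain ⟨e, ⟨a, b⟩, c⟩ := this
    exact ⟨e, a, b, c⟩
  choose ψ hE ho hi using this
  refine ⟨Finset.univ.image ψ, ?_, ?_, ?_, ?_⟩
  · intro e he
    simp only [Finset.mem_image, Finset.mem_univ, true_and] at he
    obtain ⟨v, rfl⟩ := he
    exact hE v
  · intro e he e' he' h
    simp only [Finset.coe_image, Finset.coe_univ, Set.image_univ, Set.mem_range] at he he'
    obtain ⟨v, rfl⟩ := he
    obtain ⟨w, rfl⟩ := he'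
    rw [ho, ho] at h
    rw [Subtype.ext h]
  · intro e he e' he' h
    simp only [Finset.coe_image, Finset.coe_univ, Set.image_univ, Set.mem_range] at he he'
    obtain ⟨v, rfl⟩ := he
    obtain ⟨w, rfl⟩ := he'
    rw [hi, hi] at h
    rw [hφ h]
  · ext v
    simp only [Finset.mem_image, Finset.mem_univ, true_and]
    constructor
    · rintro ⟨_, ⟨w, rfl⟩, rfl⟩
      rw [ho]; exact w.2
    · intro hv
      exact ⟨_, ⟨⟨v, hv⟩, rfl⟩, ho _⟩

theorem aux_deg_sdiff {ε W : Type*} [DecidableEq ε] [DecidableEq W]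
    (E M : Finset ε) (o : ε → W) (hM : M ⊆ E) (hinj : Set.InjOn o M) (v : W) :
    ((E \ M).filter (fun e => o e = v)).card + (if v ∈ M.image o then 1 else 0)
      = (E.filter (fun e => o e = v)).card := by
  have h0 : (M.filter (fun e => o e = v)).card = if v ∈ M.image o then 1 else 0 := by
    split_ifs with h
    · obtain ⟨e, he, rfl⟩ := Finset.mem_image.1 h
      rw [Finset.card_eq_one]
      refine ⟨e, ?_⟩
      ext e'
      simp only [Finset.mem_filter, Finset.mem_singleton]
      constructor
      · rintro ⟨a, b⟩; exact hinj a he b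
      · rintro rfl; exact ⟨he, rfl⟩
    · rw [Finset.card_eq_zero, Finset.filter_eq_empty_iff]
      intro e he hv
      exact h (Finset.mem_image.2 ⟨e, he, hv⟩)
  rw [← h0, ← Finset.card_union_of_disjoint, ← Finset.filter_union, Finset.sdiff_union_of_subset hM]
  exact Finset.disjoint_filter_filter Finset.sdiff_disjoint

theorem aux_label {ε W : Type*} [DecidableEq ε] [DecidableEq W] [Fintype W] (o i : ε → W) (k : ℕ) :
    ∀ E : Finset ε,
    (∀ v, k ≤ (E.filter (fun e => o e = v)).card ∧ (E.filter (fun e => o e = v)).card ≤ k + 1) →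
    (∀ v, k ≤ (E.filter (fun e => i e = v)).card ∧ (E.filter (fun e => i e = v)).card ≤ k + 1) →
    ∃ f g : ε → ℕ, (∀ e ∈ E, g e = f e ∨ g e = f e + 1) ∧
      (∀ e ∈ E, f e ≤ k ∧ 1 ≤ g e ∧ g e ≤ k + 1) ∧
      (∀ e ∈ E, (E.filter (fun e' => o e' = o e)).card = k → 1 ≤ f e) ∧
      (∀ e ∈ E, (E.filter (fun e' => i e' = i e)).card = k → g e ≤ k) ∧
      (∀ e ∈ E, ∀ e' ∈ E, o e = o e' → f e = f e' → e = e') ∧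
      (∀ e ∈ E, ∀ e' ∈ E, i e = i e' → g e = g e' → e = e') := by
  induction k with
  | zero =>
    intro E ho hi
    refine ⟨fun _ => 0, fun _ => 1, by simp, by simp, ?_, ?_, ?_, ?_⟩
    · intro e he h
      rw [Finset.card_eq_zero, Finset.filter_eq_empty_iff] at h
      exact absurd rfl (h he)
    · intro e he h
      rw [Finset.card_eq_zero, Finset.filter_eq_empty_iff] at h
      exact absurd rfl (h he)
    · intro e he e' he' h _
      exact Finset.card_le_one.1 (ho (o e)).2 e (by simp [he]) e' (by simp [he', h])
    · intro e he e' he' h _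
      exact Finset.card_le_one.1 (hi (i e)).2 e (by simp [he]) e' (by simp [he', h])
  | succ k ih =>
    intro E ho hi
    obtain ⟨M1, hM1E, hM1o, hM1i, hM1S⟩ := aux_match E o i
      (Finset.univ.filter (fun v => (E.filter (fun e => o e = v)).card = k + 2)) (k + 2) (by omega)
      (by intro v hv; simp at hv; omega) (fun w => (hi w).2)
    have d1o := aux_deg_sdiff E M1 o hM1E hM1o
    have d1i := aux_deg_sdiff E M1 i hM1E hM1i
    have e1o : ∀ v, ((E \ M1).filter (fun e => o e = v)).card = k + 1 := by
      intro v
      have := d1o v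
      have h2 := ho v
      rw [hM1S] at this
      simp only [Finset.mem_filter, Finset.mem_univ, true_and] at this
      split_ifs at this <;> omega
    obtain ⟨M2, hM2E, hM2i, hM2o, hM2S⟩ := aux_match (E \ M1) i o
      (Finset.univ.filter (fun v => v ∉ M1.image i)) (k + 1) (by omega)
      (by
        intro v hv
        simp only [Finset.mem_filter, Finset.mem_univ, true_and] at hv
        have := d1i v
        rw [if_neg hv] at this
        have := hi v
        omega) (fun w => (e1o w).le)
    have d2o := aux_deg_sdiff (E \ M1) M2 o hM2E hM2o
    have d2i := aux_deg_sdiff (E \ M1) M2 i hM2E hM2i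
    have e2i : ∀ v, (((E \ M1) \ M2).filter (fun e => i e = v)).card + 1 =
        (E.filter (fun e => i e = v)).card := by
      intro v
      have h1 := d1i v
      have h2 := d2i v
      rw [hM2S] at h2
      simp only [Finset.mem_filter, Finset.mem_univ, true_and] at h2
      split_ifs at h1 h2 <;> omega
    obtain ⟨f, g, hfg, hb, hf, hg, hfi, hgi⟩ := ih ((E \ M1) \ M2)
      (by
        intro v
        have h1 := d2o v
        have h2 := e1o v
        split_ifs at h1 <;> omega)
      (by
        intro v
        have h1 := e2i v
        have h2 := hi v
        omega)
    have mem : ∀ e ∈ E, e ∉ M1 → e ∉ M2 → e ∈ (E \ M1) \ M2 := by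
      intro e a b c; simp [a, b, c]
    have dis : ∀ e ∈ M1, ∀ e' ∈ M2, i e ≠ i e' := by
      intro e he e' he' h
      have : i e' ∈ M2.image i := Finset.mem_image_of_mem _ he'
      rw [hM2S] at this
      simp only [Finset.mem_filter, Finset.mem_univ, true_and] at this
      exact this (Finset.mem_image.2 ⟨e, he, h⟩)
    have key : ∀ e ∈ M2, ∀ e' ∈ (E \ M1) \ M2, o e = o e' → 1 ≤ f e' := by
      intro e he e' he' h
      apply hf e' he'
      have h1 := d2o (o e')
      rw [if_pos (Finset.mem_image.2 ⟨e, he, h⟩), e1o] at h1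
      omega
    refine ⟨fun e => if e ∈ M1 then 0 else if e ∈ M2 then 1 else f e + 1,
      fun e => if e ∈ M1 then 1 else if e ∈ M2 then 1 else g e + 1, ?_, ?_, ?_, ?_, ?_, ?_⟩
    · intro e he
      by_cases m1 : e ∈ M1
      · simp [m1]
      by_cases m2 : e ∈ M2
      · simp [m1, m2]
      have := hfg e (mem e he m1 m2)
      simp only [m1, m2, if_false]
      omega
    · intro e he
      by_cases m1 : e ∈ M1
      · simp [m1]
      by_cases m2 : e ∈ M2
      · simp [m1, m2]
      have := hb e (mem e he m1 m2)
      simp only [m1, m2, if_false]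
      omega
    · intro e he h
      by_cases m1 : e ∈ M1
      · have : o e ∈ M1.image o := Finset.mem_image_of_mem _ m1
        rw [hM1S] at this
        simp only [Finset.mem_filter, Finset.mem_univ, true_and] at this
        omega
      by_cases m2 : e ∈ M2
      · simp [m1, m2]
      simp only [m1, m2, if_false]
      omega
    · intro e he h
      by_cases m1 : e ∈ M1
      · simp [m1]
      by_cases m2 : e ∈ M2
      · simp [m1, m2]
      have h1 := hg e (mem e he m1 m2)
      have h2 := e2i (i e)
      simp only [m1, m2, if_false]
      omega
    · intro e he e' he' h hh
      by_cases m1 : e ∈ M1 <;> by_cases m1' : e' ∈ M1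
      · exact hM1o m1 m1' h
      · simp only [m1, m1', if_true, if_false] at hh
        split_ifs at hh
      · simp only [m1, m1', if_true, if_false] at hh
        split_ifs at hh
      by_cases m2 : e ∈ M2 <;> by_cases m2' : e' ∈ M2
      · exact hM2o m2 m2' h
      · have := key e m2 e' (mem e' he' m1' m2') h
        simp only [m1, m1', m2, m2', if_true, if_false] at hh
        omega
      · have := key e' m2' e (mem e he m1 m2) h.symm
        simp only [m1, m1', m2, m2', if_true, if_false] at hh
        omega
      · simp only [m1, m1', m2, m2', if_false] at hh
        exact hfi e (mem e he m1 m2) e' (mem e' he' m1' m2') h (by omega)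
    · intro e he e' he' h hh
      have pos : ∀ e ∈ E, e ∉ M1 → e ∉ M2 → 1 ≤ g e := fun e a b c => (hb e (mem e a b c)).2.1
      by_cases m1 : e ∈ M1 <;> by_cases m1' : e' ∈ M1
      · exact hM1i m1 m1' h
      · by_cases m2' : e' ∈ M2
        · exact absurd h (dis e m1 e' m2')
        · have := pos e' he' m1' m2'
          simp only [m1, m1', m2', if_true, if_false] at hh
          omega
      · by_cases m2 : e ∈ M2
        · exact absurd h.symm (dis e' m1' e m2)
        · have := pos e he m1 m2
          simp only [m1, m1', m2, if_true, if_false] at hh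
          omega
      by_cases m2 : e ∈ M2 <;> by_cases m2' : e' ∈ M2
      · exact hM2i m2 m2' h
      · have := pos e' he' m1' m2'
        simp only [m1, m1', m2, m2', if_true, if_false] at hh
        omega
      · have := pos e he m1 m2
        simp only [m1, m1', m2, m2', if_true, if_false] at hh
        omega
      · simp only [m1, m1', m2, m2', if_false] at hh
        exact hgi e (mem e he m1 m2) e' (mem e' he' m1' m2') h (by omega)

theorem aux_orient {ε W : Type*} [Fintype ε] [DecidableEq ε] [DecidableEq W] [Fintype W]
    (r : ℕ) (N : ε → Finset W) (hN : ∀ x, (N x).card = 2)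
    (hW : ∀ y, (Finset.univ.filter (fun x => y ∈ N x)).card = 2 * r + 1) :
    ∃ o : ε → W, (∀ x, o x ∈ N x) ∧
      ∀ y, r ≤ (Finset.univ.filter (fun x => o x = y)).card ∧
        (Finset.univ.filter (fun x => o x = y)).card ≤ r + 1 := by
  classical
  have cnt : ∀ s : Finset ε, s.card * 2 ≤ (s.biUnion N).card * (2 * r + 1) := by
    intro s
    refine Finset.card_mul_le_card_mul (fun x y => y ∈ N x) ?_ ?_
    · intro x hx
      rw [← hN x]
      apply Finset.card_le_card
      intro y hy
      simp only [Finset.bipartiteAbove, Finset.mem_filter, Finset.mem_biUnion]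
      exact ⟨⟨x, hx, hy⟩, hy⟩
    · intro y _
      rw [← hW y]
      apply Finset.card_le_card
      intro x hx
      simp only [Finset.bipartiteBelow, Finset.mem_filter] at hx
      simp [hx.2]
  have tot : Fintype.card ε * 2 = Fintype.card W * (2 * r + 1) := by
    refine Finset.card_mul_eq_card_mul (s := Finset.univ) (t := Finset.univ) (fun x y => y ∈ N x) ?_ ?_
    · intro x _
      rw [← hN x]
      congr 1
      ext y
      simp [Finset.bipartiteAbove]
    · intro y _
      rw [← hW y]
      rfl
  obtain ⟨m, hm⟩ : ∃ m, Fintype.card W = 2 * m := by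
    refine ⟨Fintype.card ε - Fintype.card W * r, ?_⟩
    have : Fintype.card ε * 2 = 2 * (Fintype.card W * r) + Fintype.card W := by rw [tot]; ring
    omega
  let t : ε ⊕ Fin m → Finset (W × Fin (r + 1)) :=
    Sum.elim (fun x => N x ×ˢ Finset.univ) (fun _ => Finset.univ ×ˢ {Fin.last r})
  have hall : ∀ s : Finset (ε ⊕ Fin m), s.card ≤ (s.biUnion t).card := by
    intro s
    have hs : s.card = s.toLeft.card + s.toRight.card := Finset.card_toLeft_add_card_toRight.symm
    have c1 := cnt s.toLeft
    set U := s.toLeft.biUnion N with hU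
    have hsub : U ×ˢ Finset.univ ⊆ s.biUnion t := by
      rintro ⟨y, j⟩ hy
      simp only [Finset.mem_product, hU, Finset.mem_biUnion, Finset.mem_toLeft] at hy
      obtain ⟨⟨x, hx, hxy⟩, -⟩ := hy
      exact Finset.mem_biUnion.2 ⟨_, hx, by simp [t, hxy]⟩
    have c2 : U.card * (r + 1) ≤ (s.biUnion t).card := by
      have := Finset.card_le_card hsub
      simpa [Finset.card_product] using this
    rcases s.toRight.eq_empty_or_nonempty with h | ⟨j0, hj0⟩
    · rw [h] at hs
      simp at hs
      nlinarith
    · have hsub2 : (U ×ˢ (Finset.univ.image (Fin.castSucc : Fin r → Fin (r+1)))) ∪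
          (Finset.univ ×ˢ {Fin.last r}) ⊆ s.biUnion t := by
        apply Finset.union_subset
        · exact (Finset.product_subset_product_right (Finset.subset_univ _)).trans hsub
        · intro p hp
          exact Finset.mem_biUnion.2 ⟨_, Finset.mem_toRight.1 hj0, hp⟩
      have c3 := Finset.card_le_card hsub2
      rw [Finset.card_union_of_disjoint, Finset.card_product, Finset.card_product,
        Finset.card_image_of_injective _ (Fin.castSucc_injective r)] at c3
      · simp only [Finset.card_univ, Fintype.card_fin, Finset.card_singleton, mul_one] at c3
        have c4 : s.toRight.card ≤ m := by simpa using Finset.card_le_univ s.toRight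
        have c5 : U.card ≤ Fintype.card W := Finset.card_le_univ U
        nlinarith
      · rw [Finset.disjoint_left]
        rintro ⟨y, j⟩ h1 h2
        simp only [Finset.mem_product, Finset.mem_image, Finset.mem_univ, true_and,
          Finset.mem_singleton] at h1 h2
        obtain ⟨-, a, rfl⟩ := h1
        exact (Fin.castSucc_lt_last a).ne h2
  obtain ⟨φ, hφ, hφt⟩ := (Finset.all_card_le_biUnion_card_iff_exists_injective t).1 hall
  have hbij : Function.Bijective φ := by
    rw [Fintype.bijective_iff_injective_and_card]
    refine ⟨hφ, ?_⟩
    simp only [Fintype.card_sum, Fintype.card_prod, Fintype.card_fin]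
    nlinarith
  refine ⟨fun x => (φ (Sum.inl x)).1, ?_, ?_⟩
  · intro x
    have := hφt (Sum.inl x)
    simpa [t] using this
  · intro y
    constructor
    · have : ∀ j : Fin r, ∃ x, φ (Sum.inl x) = (y, j.castSucc) := by
        intro j
        obtain ⟨a, ha⟩ := hbij.2 (y, j.castSucc)
        rcases a with x | b
        · exact ⟨x, ha⟩
        · have := hφt (Sum.inr b)
          rw [ha] at this
          simp [t] at this
          exact absurd this (Fin.castSucc_lt_last j).ne'
      choose x hx using this
      have := Finset.card_le_card_of_injOn (s := (Finset.univ : Finset (Fin r)))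
        (t := Finset.univ.filter (fun x => (φ (Sum.inl x)).1 = y)) x
        (by intro j _; simp [hx]) (by
          intro a _ b _ h
          have h1 := hx a
          rw [h, hx b] at h1
          simpa using h1.symm)
      simpa using this
    · have := Finset.card_le_card_of_injOn (t := (Finset.univ : Finset (Fin (r+1))))
        (s := Finset.univ.filter (fun x => (φ (Sum.inl x)).1 = y)) (fun x => (φ (Sum.inl x)).2)
        (by intro j _; simp) (by
          intro a ha b hb h
          simp at ha hb
          have : φ (Sum.inl a) = φ (Sum.inl b) := Prod.ext (ha.trans hb.symm) h
          simpa using hφ this)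
      simpa using this

theorem aux_palette_eq {V : Type*} (G : SimpleGraph V) (c : Sym2 V → ℕ) (v : V) :
    palette G c v = (fun w => c s(v, w)) '' G.neighborSet v := by
  ext n
  simp only [palette, Set.mem_setOf_eq, Set.mem_image, SimpleGraph.mem_neighborSet]
  constructor
  · rintro ⟨e, he, hv, rfl⟩
    obtain ⟨w, rfl⟩ := Sym2.mem_iff_exists.1 hv
    exact ⟨w, he, rfl⟩
  · rintro ⟨w, hw, rfl⟩
    exact ⟨s(v, w), hw, by simp, rfl⟩

theorem aux_palette_card {V : Type*} [Fintype V] (G : SimpleGraph V) [DecidableRel G.Adj]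
    (c : Sym2 V → ℕ) (hc : IsProperEdgeColoring G c) (v : V) :
    (palette G c v).ncard = G.degree v := by
  rw [aux_palette_eq, Set.ncard_image_of_injOn]
  · rw [← SimpleGraph.card_neighborSet_eq_degree, ← Nat.card_eq_fintype_card]
    rfl
  · intro a ha b hb h
    by_contra hab
    exact hc s(v, a) ha s(v, b) hb (fun h' => hab (Sym2.congr_right.1 h')) ⟨v, by simp, by simp⟩ h

theorem aux_lower {V : Type*} [Fintype V]
    (G : SimpleGraph V) [DecidableRel G.Adj] (r : ℕ) (hr : 1 ≤ r)
    (hG : IsBiregular G 2 (2 * r + 1)) (c : Sym2 V → ℕ) (hc : IsProperEdgeColoring G c) :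
    r + 2 ≤ (Set.range (palette G c)).ncard := by
  classical
  obtain ⟨X, Y, -, ⟨y, hy⟩, hXY, hcov, hadj, hX, hY⟩ := hG
  have hcard := aux_palette_card G c hc
  let P : Finset (Set ℕ) := X.image (palette G c)
  have hP : ∀ p ∈ P, p.ncard = 2 := by
    intro p hp
    obtain ⟨x, hx, rfl⟩ := Finset.mem_image.1 hp
    rw [hcard, hX x hx]
  have hyP : palette G c y ∉ P := by
    intro h
    have := hP _ h
    rw [hcard, hY y hy] at this
    omega
  have hsub : ((insert (palette G c y) P : Finset (Set ℕ)) : Set (Set ℕ)) ⊆ Set.range (palette G c) := by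
    intro p hp
    simp only [Finset.coe_insert, Set.mem_insert_iff, P, Finset.coe_image, Set.mem_image] at hp
    rcases hp with rfl | ⟨x, -, rfl⟩ <;> exact ⟨_, rfl⟩
  have h1 := Set.ncard_le_ncard hsub (Set.finite_range _)
  rw [Set.ncard_coe_finset, Finset.card_insert_of_notMem hyP] at h1
  have hfin : ∀ p ∈ P, p.Finite := fun p hp => Set.finite_of_ncard_pos (by rw [hP p hp]; omega)
  have h2 : palette G c y ⊆ ⋃ p ∈ P, p := by
    rintro n ⟨e, he, hye, rfl⟩
    obtain ⟨x, rfl⟩ := Sym2.mem_iff_exists.1 hye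
    have hx : x ∈ X := by
      rcases hadj y x he with h | h
      · exact absurd hy (Finset.disjoint_left.1 hXY h.1)
      · exact h.2
    simp only [Set.mem_iUnion]
    exact ⟨palette G c x, Finset.mem_image_of_mem _ hx, s(y, x), he, by simp, rfl⟩
  have h3 := Set.ncard_le_ncard h2 (P.finite_toSet.biUnion hfin)
  have h4 : (⋃ p ∈ P, p).ncard ≤ ∑ p ∈ P, p.ncard := Finset.set_ncard_biUnion_le P id
  rw [Finset.sum_congr rfl hP, Finset.sum_const, smul_eq_mul] at h4
  rw [hcard, hY y hy] at h3
  omega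

theorem aux_upper {V : Type*} [Fintype V]
    (G : SimpleGraph V) [DecidableRel G.Adj] (r : ℕ) (hr : 1 ≤ r)
    (hG : IsBiregular G 2 (2 * r + 1)) :
    ∃ c : Sym2 V → ℕ, IsProperEdgeColoring G c ∧
      (Set.range (palette G c)).ncard ≤ 2 * r + 2 := by
  classical
  obtain ⟨X, Y, -, -, hXY, hcov, hadj, hX, hY⟩ := hG
  have hdis : ∀ v, v ∈ X → v ∈ Y → False := fun v a b => Finset.disjoint_left.1 hXY a b
  have adjX : ∀ x ∈ X, ∀ w, G.Adj x w → w ∈ Y := by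
    intro x hx w h
    rcases hadj x w h with h | h
    · exact h.2
    · exact (hdis x hx h.1).elim
  have adjY : ∀ y ∈ Y, ∀ w, G.Adj y w → w ∈ X := by
    intro x hx w h
    rcases hadj x w h with h | h
    · exact (hdis x h.1 hx).elim
    · exact h.2
  let N : {x // x ∈ X} → Finset {y // y ∈ Y} := fun x => Finset.univ.filter (fun y => G.Adj x.1 y.1)
  have hN : ∀ x, (N x).card = 2 := by
    intro x
    rw [← hX x.1 x.2, ← SimpleGraph.card_neighborFinset_eq_degree,
      ← Finset.card_map (Function.Embedding.subtype _)]
    congr 1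
    ext w
    simp only [N, Finset.mem_map, Finset.mem_filter, Finset.mem_univ, true_and,
      SimpleGraph.mem_neighborFinset, Function.Embedding.subtype_apply]
    constructor
    · rintro ⟨a, h, rfl⟩; exact h
    · intro h; exact ⟨⟨w, adjX _ x.2 _ h⟩, h, rfl⟩
  have hW : ∀ y, (Finset.univ.filter (fun x => y ∈ N x)).card = 2 * r + 1 := by
    intro y
    rw [← hY y.1 y.2, ← SimpleGraph.card_neighborFinset_eq_degree,
      ← Finset.card_map (Function.Embedding.subtype _)]
    congr 1
    ext w
    simp only [N, Finset.mem_map, Finset.mem_filter, Finset.mem_univ, true_and,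
      SimpleGraph.mem_neighborFinset, Function.Embedding.subtype_apply]
    constructor
    · rintro ⟨a, h, rfl⟩; exact h.symm
    · intro h; exact ⟨⟨w, adjY _ y.2 _ h⟩, h.symm, rfl⟩
  obtain ⟨o, hoN, hdo⟩ := aux_orient r N hN hW
  have : ∀ x, ∃ z, N x = {o x, z} ∧ z ≠ o x := by
    intro x
    obtain ⟨a, b, hab, h⟩ := Finset.card_eq_two.1 (hN x)
    have := hoN x
    rw [h] at this
    simp only [Finset.mem_insert, Finset.mem_singleton] at this
    rcases this with h' | h'
    · exact ⟨b, by rw [h, h'], by rw [h']; exact hab.symm⟩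
    · exact ⟨a, by rw [h, h', Finset.pair_comm], by rw [h']; exact hab⟩
  choose i hNi hio using this
  have hmem : ∀ x y, G.Adj x.1 y.1 ↔ (o x = y ∨ i x = y) := by
    intro x y
    have : y ∈ N x ↔ G.Adj x.1 y.1 := by simp [N]
    rw [← this, hNi]
    simp only [Finset.mem_insert, Finset.mem_singleton]
    tauto
  have hsum : ∀ y, (Finset.univ.filter (fun x => o x = y)).card +
      (Finset.univ.filter (fun x => i x = y)).card = 2 * r + 1 := by
    intro y
    rw [← hW y, ← Finset.card_union_of_disjoint]
    · congr 1
      ext x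
      simp only [Finset.mem_union, Finset.mem_filter, Finset.mem_univ, true_and, hNi,
        Finset.mem_insert, Finset.mem_singleton]
      tauto
    · rw [Finset.disjoint_left]
      intro x h1 h2
      simp only [Finset.mem_filter, Finset.mem_univ, true_and] at h1 h2
      exact hio x (h2.trans h1.symm)
  obtain ⟨f, g, hfg, hb, hf0, hg0, hfi, hgi⟩ := aux_label o i r Finset.univ hdo (by
    intro y
    have := hsum y
    have := hdo y
    omega)
  simp only [Finset.mem_univ, true_implies] at hfg hb hf0 hg0 hfi hgi
  let q : ℕ → ℕ := fun n => if n = r + 1 then 0 else r + n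
  let c : Sym2 V → ℕ := fun e =>
    if h : ∃ x : {x // x ∈ X}, e = s(x.1, (o x).1) then f h.choose else
    if h : ∃ x : {x // x ∈ X}, e = s(x.1, (i x).1) then q (g h.choose) else 0
  have inj : ∀ (x x' : {x // x ∈ X}) (y y' : {y // y ∈ Y}), s(x.1, y.1) = s(x'.1, y'.1) → x = x' ∧ y = y' := by
    intro x x' y y' h
    rw [Sym2.eq_iff] at h
    rcases h with ⟨h1, h2⟩ | ⟨h1, h2⟩
    · exact ⟨Subtype.ext h1, Subtype.ext h2⟩
    · exact (hdis x.1 x.2 (h1 ▸ y'.2)).elim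
  have co : ∀ x, c s(x.1, (o x).1) = f x := by
    intro x
    have h : ∃ x' : {x // x ∈ X}, s(x.1, (o x).1) = s(x'.1, (o x').1) := ⟨x, rfl⟩
    simp only [c]
    rw [dif_pos h]
    exact congrArg f (inj _ _ _ _ h.choose_spec).1.symm
  have ci : ∀ x, c s(x.1, (i x).1) = q (g x) := by
    intro x
    have h : ∃ x' : {x // x ∈ X}, s(x.1, (i x).1) = s(x'.1, (i x').1) := ⟨x, rfl⟩
    have h' : ¬ ∃ x' : {x // x ∈ X}, s(x.1, (i x).1) = s(x'.1, (o x').1) := by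
      rintro ⟨x', hx'⟩
      obtain ⟨rfl, h2⟩ := inj _ _ _ _ hx'
      exact hio x h2
    simp only [c]
    rw [dif_neg h', dif_pos h]
    exact congrArg (fun z => q (g z)) (inj _ _ _ _ h.choose_spec).1.symm
  have hoi : ∀ x x', o x = i x' → f x ≠ q (g x') := by
    intro x x' h hh
    have b1 := hb x
    have b2 := hb x'
    have s1 := hsum (o x)
    have s2 := hdo (o x)
    have s3 := hf0 x
    have s4 := hg0 x'
    rw [← h] at s4
    simp only [q] at hh
    split_ifs at hh <;> omega
  have hqinj : ∀ x x', q (g x) = q (g x') → g x = g x' := by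
    intro x x' h
    have b1 := hb x
    have b2 := hb x'
    simp only [q] at h
    split_ifs at h <;> omega
  have hx2 : ∀ x, f x ≠ q (g x) := by
    intro x h
    have b1 := hb x
    have b2 := hfg x
    simp only [q] at h
    split_ifs at h <;> omega
  have norm : ∀ e ∈ G.edgeSet, ∃ x, e = s(x.1, (o x).1) ∨ e = s(x.1, (i x).1) := by
    intro e
    induction e using Sym2.ind with
    | _ a b =>
      intro h
      rw [SimpleGraph.mem_edgeSet] at h
      rcases hadj a b h with ⟨ha, hb⟩ | ⟨ha, hb⟩
      · refine ⟨⟨a, ha⟩, ?_⟩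
        rcases (hmem ⟨a, ha⟩ ⟨b, hb⟩).1 h with h' | h' <;> simp [h']
      · refine ⟨⟨b, hb⟩, ?_⟩
        rcases (hmem ⟨b, hb⟩ ⟨a, ha⟩).1 h.symm with h' | h' <;> simp [h', Sym2.eq_swap]
  have share : ∀ (x x' : {x // x ∈ X}) (y y' : {y // y ∈ Y}),
      (∃ v, v ∈ s(x.1, y.1) ∧ v ∈ s(x'.1, y'.1)) → x = x' ∨ y = y' := by
    rintro x x' y y' ⟨v, h1, h2⟩
    rw [Sym2.mem_iff] at h1 h2
    rcases h1 with rfl | rfl <;> rcases h2 with h2 | h2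
    · exact Or.inl (Subtype.ext h2)
    · exact (hdis _ x.2 (h2 ▸ y'.2)).elim
    · exact (hdis _ x'.2 (h2 ▸ y.2)).elim
    · exact Or.inr (Subtype.ext h2)
  have proper : IsProperEdgeColoring G c := by
    intro e1 he1 e2 he2 hne hsh hcc
    obtain ⟨x1, rfl | rfl⟩ := norm e1 he1 <;> obtain ⟨x2, rfl | rfl⟩ := norm e2 he2 <;>
      have hs := share _ _ _ _ hsh <;> simp only [co, ci] at hcc
    · have : x1 = x2 := hs.elim id (fun h => hfi _ _ h hcc)
      exact hne (by rw [this])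
    · rcases hs with rfl | hs
      · exact hx2 _ hcc
      · exact hoi _ _ hs hcc
    · rcases hs with rfl | hs
      · exact hx2 _ hcc.symm
      · exact hoi _ _ hs.symm hcc.symm
    · have : x1 = x2 := hs.elim id (fun h => hgi _ _ h (hqinj _ _ hcc))
      exact hne (by rw [this])
  refine ⟨c, proper, ?_⟩
  have range : ∀ e ∈ G.edgeSet, c e < 2 * r + 1 := by
    intro e he
    obtain ⟨x, rfl | rfl⟩ := norm e he
    · rw [co]; have := hb x; omega
    · rw [ci]
      have := hb x
      simp only [q]
      split_ifs <;> omega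
  have palY : ∀ y ∈ Y, palette G c y = Set.Iio (2 * r + 1) := by
    intro y hy
    apply Set.eq_of_subset_of_ncard_le
    · rintro n ⟨e, he, -, rfl⟩
      exact range e he
    · rw [aux_palette_card G c proper, hY y hy]
      simp
    · exact Set.finite_Iio _
  have palX : ∀ x : {x // x ∈ X}, palette G c x.1 = {f x, q (g x)} := by
    intro x
    rw [aux_palette_eq]
    have : G.neighborSet x.1 = {(o x).1, (i x).1} := by
      ext w
      simp only [SimpleGraph.mem_neighborSet, Set.mem_insert_iff, Set.mem_singleton_iff]
      constructor
      · intro h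
        rcases (hmem x ⟨w, adjX _ x.2 _ h⟩).1 h with h' | h' <;> simp [h']
      · rintro (rfl | rfl)
        · exact (hmem x _).2 (Or.inl rfl)
        · exact (hmem x _).2 (Or.inr rfl)
    rw [this, Set.image_pair, co, ci]
  let T : Finset (Set ℕ) := insert (Set.Iio (2 * r + 1))
    (((Finset.range r).image (fun a => ({a + 1, q (a + 1)} : Set ℕ))) ∪
      ((Finset.range (r + 1)).image (fun a => ({a, q (a + 1)} : Set ℕ))))
  have hT : Set.range (palette G c) ⊆ (T : Set (Set ℕ)) := by
    rintro _ ⟨v, rfl⟩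
    rw [Finset.mem_coe]
    rcases hcov v with hv | hv
    · have b := hb ⟨v, hv⟩
      rw [palX ⟨v, hv⟩]
      apply Finset.mem_insert_of_mem
      rcases hfg ⟨v, hv⟩ with h | h
      · apply Finset.mem_union_left
        refine Finset.mem_image.2 ⟨f ⟨v, hv⟩ - 1, Finset.mem_range.2 (by omega), ?_⟩
        rw [h, Nat.sub_add_cancel (by omega)]
      · apply Finset.mem_union_right
        refine Finset.mem_image.2 ⟨f ⟨v, hv⟩, Finset.mem_range.2 (by omega), ?_⟩
        rw [h]
    · rw [palY v hv]
      exact Finset.mem_insert_self _ _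
  have h1 := Set.ncard_le_ncard hT T.finite_toSet
  rw [Set.ncard_coe_finset] at h1
  refine h1.trans ((Finset.card_insert_le _ _).trans ?_)
  have h2 := Finset.card_union_le ((Finset.range r).image (fun a => ({a + 1, q (a + 1)} : Set ℕ)))
      ((Finset.range (r + 1)).image (fun a => ({a, q (a + 1)} : Set ℕ)))
  have h3 := Finset.card_image_le (s := Finset.range r) (f := fun a => ({a + 1, q (a + 1)} : Set ℕ))
  have h4 := Finset.card_image_le (s := Finset.range (r + 1)) (f := fun a => ({a, q (a + 1)} : Set ℕ))
  rw [Finset.card_range] at h3 h4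
  omega

/-- If `G` is a `(2,2r+1)`-biregular graph, then `r + 2 ≤ š(G) ≤ 2r + 2`. -/
theorem palette_index_two_odd_biregular {V : Type*} [Fintype V]
    (G : SimpleGraph V) [DecidableRel G.Adj] (r : ℕ) (hr : 1 ≤ r)
    (hG : IsBiregular G 2 (2 * r + 1)) :
    r + 2 ≤ paletteIndex G ∧ paletteIndex G ≤ 2 * r + 2 := by
  obtain ⟨c, hc, hle⟩ := aux_upper G r hr hG
  constructor
  · obtain ⟨c', hc', h⟩ := Nat.sInf_mem (s := {k | ∃ c : Sym2 V → ℕ, IsProperEdgeColoring G c ∧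
      (Set.range (palette G c)).ncard = k}) ⟨_, c, hc, rfl⟩
    unfold paletteIndex
    rw [← h]
    exact aux_lower G r hr hG c' hc'
  · have h : paletteIndex G ≤ (Set.range (palette G c)).ncard := Nat.sInf_le ⟨c, hc, rfl⟩
    exact h.trans hle
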